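/- arXiv:2304.10795 — 2 statements merged into one kernel-verified Lean document; each statement's English description precedes it below -/
import Mathlib

section
/- If Ŝ is a Neumann subgroup of the extended modular group M̂ = PGL(2,ℤ) that is not contained in the modular group M = PSL(2,ℤ), then S = Ŝ ∩ M is a maximal nonparabolic subgroup of M and S is not a Neumann subgroup of M. -/
open Matrix Pointwise

noncomputable section

abbrev GL2Z := Matrix.GeneralLinearGroup (Fin 2) ℤ

/-- The subgroup {±I} of GL(2,ℤ), which is its center. -/
def pmI : Subgroup GL2Z := Subgroup.zpowers (-1)

instance pmI_normal : pmI.Normal := by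
  constructor
  rintro n hn g
  obtain ⟨k, hk⟩ := Subgroup.mem_zpowers_iff.mp hn
  have hc : Commute ((-1 : GL2Z) ^ k) g := (Commute.neg_one_left g).zpow_left k
  have : g * n * g⁻¹ = n := by
    rw [← hk, ← hc.eq]; group
  rw [this]; exact hn

/-- The extended modular group PGL(2,ℤ) = GL(2,ℤ)/{±I}. -/
abbrev Mhat := GL2Z ⧸ pmI

def pr : GL2Z →* Mhat := QuotientGroup.mk' pmI

def tauGL : GL2Z := ⟨!![1,1;0,1], !![1,-1;0,1], by decide, by decide⟩
def nuGL : GL2Z := ⟨!![-1,0;0,1], !![-1,0;0,1], by decide, by decide⟩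
def omegaGL : GL2Z := ⟨!![0,-1;1,0], !![0,1;-1,0], by decide, by decide⟩
def phiGL : GL2Z := ⟨!![0,-1;1,1], !![1,1;-1,0], by decide, by decide⟩

/-- τ, the class of [[1,1],[0,1]]. -/
def tau : Mhat := pr tauGL
/-- ν, the class of [[-1,0],[0,1]]. -/
def nu : Mhat := pr nuGL
/-- ω, the class of [[0,-1],[1,0]]. -/
def omega : Mhat := pr omegaGL
/-- φ, the class of [[0,-1],[1,1]]. -/
def phi : Mhat := pr phiGL

/-- T̂ = ⟨τ, ν⟩, the stabilizer of ∞. -/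
def That : Subgroup Mhat := Subgroup.closure {tau, nu}

/-- A Neumann subgroup of the extended modular group: a complement of T̂. -/
def IsNeumann (S : Subgroup Mhat) : Prop :=
  (S : Set Mhat) * (That : Set Mhat) = Set.univ ∧ S ⊓ That = ⊥

/-- The modular group PSL(2,ℤ), as the subgroup of PGL(2,ℤ) of classes of
matrices of determinant one. -/
def Msub : Subgroup Mhat :=
  Subgroup.map pr (MonoidHom.ker (Matrix.GeneralLinearGroup.det))

/-- A parabolic element of the modular group: a nonidentity element of M
conjugate in M to a power of τ. -/
def IsParabolic (g : Mhat) : Prop :=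
  g ≠ 1 ∧ ∃ h ∈ Msub, ∃ n : ℤ, h⁻¹ * g * h = tau ^ n

/-- A nonparabolic subgroup of the modular group M. -/
def IsNonparabolic (S : Subgroup Mhat) : Prop :=
  S ≤ Msub ∧ ∀ g ∈ S, ¬ IsParabolic g

/-- A maximal nonparabolic subgroup of the modular group M: maximal under
inclusion among nonparabolic subgroups of M. -/
def IsMaximalNonparabolic (S : Subgroup Mhat) : Prop :=
  IsNonparabolic S ∧ ∀ U : Subgroup Mhat, IsNonparabolic U → S ≤ U → U = S

/-- A Neumann subgroup of the modular group M: a complement of T = ⟨τ⟩ in M. -/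
def IsNeumannM (S : Subgroup Mhat) : Prop :=
  S ≤ Msub ∧
    (S : Set Mhat) * (Subgroup.zpowers tau : Set Mhat) = (Msub : Set Mhat) ∧
    S ⊓ Subgroup.zpowers tau = ⊥

/-!
If a nonparabolic `U ≤ M` properly contains `S = Ŝ ∩ M`, then `U = S ∪ (Ŝ \ M) r` for some
reflection `r ∈ T̂`, and `Ŝ ∪ Ŝ r` turns out to be a subgroup, hence a complement of `T` in `M̂`.
But `T` has no complement in `M̂`: the action of `M̂` on the cosets of one would be an action on `ℤ`
with `τ` acting as `k ↦ k + 1`. There `ν` would act as some reflection `k ↦ c - k`, and the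
relations `ω² = (ωτ)³ = 1`, `νω = ων` are incompatible with both parities of `c`.

`S` is not a complement of `T` in `M`: for `s ∈ Ŝ \ M`, the factorization of `sν ∈ M` in `Ŝ T̂` is
unique, so `sν ∉ S T`.
-/

open Subgroup

section Complement

variable {G : Type*} [Group G] {H K N U : Subgroup G}

lemma eq_one_of_conj_mem_of_isComplement' (hHK : IsComplement' H K) {g k : G} (hk : k ∈ K)
    (hgk : g * k * g⁻¹ ∈ H) : k = 1 := by
  obtain ⟨⟨⟨h, hh⟩, ⟨l, hl⟩⟩, rfl⟩ := hHK.surjective g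
  have hconj : l * k * l⁻¹ ∈ H := by
    convert H.mul_mem (H.mul_mem (H.inv_mem hh) hgk) hh using 1
    group
  exact conj_eq_one_iff.mp <|
    disjoint_def.mp hHK.disjoint hconj (K.mul_mem (K.mul_mem hl hk) (K.inv_mem hl))

lemma inf_mul_inf_ne_of_isComplement' (hHK : IsComplement' H K) (hN : N.index = 2)
    (hH : ¬ H ≤ N) (hK : ¬ K ≤ N) :
    ((H ⊓ N : Subgroup G) : Set G) * ((K ⊓ N : Subgroup G) : Set G) ≠ N := by
  obtain ⟨h, hh, hhN⟩ := SetLike.not_le_iff_exists.mp hH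
  obtain ⟨k, hk, hkN⟩ := SetLike.not_le_iff_exists.mp hK
  have hhk : h * k ∈ (N : Set G) := (mul_mem_iff_of_index_two hN).mpr (iff_of_false hhN hkN)
  intro hmul
  rw [← hmul] at hhk
  obtain ⟨s, hs, t, ht, hst⟩ := hhk
  have huniq : ((⟨s, hs.1⟩, ⟨t, ht.1⟩) : H × K) = (⟨h, hh⟩, ⟨k, hk⟩) := hHK.injective hst
  simp only [Prod.mk.injEq, Subtype.mk.injEq] at huniq
  exact hhN (huniq.1 ▸ hs.2)

lemma mem_sup_zpowers_iff {r : G} (hr : r * r = 1) (hrH : ∀ h ∈ H, r * h ∈ H ∨ r * h * r ∈ H)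
    {g : G} : g ∈ H ⊔ zpowers r ↔ g ∈ H ∨ g * r ∈ H := by
  let L : Subgroup G :=
    { carrier := {g | g ∈ H ∨ g * r ∈ H}
      one_mem' := Or.inl H.one_mem
      mul_mem' := by
        have hmul_of_mem {a b : G} (ha : a ∈ H ∨ a * r ∈ H) (hb : b ∈ H) :
            a * b ∈ H ∨ a * b * r ∈ H := by
          rcases ha with ha | ha
          · exact Or.inl (H.mul_mem ha hb)
          · have hcancel : r * (r * b) = b := by rw [← mul_assoc, hr, one_mul]
            refine (hrH b hb).imp (fun h => ?_) fun h => ?_ <;>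
              simpa [mul_assoc, hcancel, ← mul_assoc r r, hr] using H.mul_mem ha h
        rintro a b ha (hb | hb)
        · exact hmul_of_mem ha hb
        · simpa [mul_assoc, hr, or_comm] using hmul_of_mem ha hb
      inv_mem' := by
        rintro g (hg | hg)
        · exact Or.inl (H.inv_mem hg)
        · have := hrH _ (H.inv_mem hg)
          simpa [← mul_assoc] using this }
  refine ⟨fun hg => ?_, ?_⟩
  · have hL : H ⊔ zpowers r ≤ L :=
      sup_le (fun h => Or.inl) (zpowers_le.mpr (Or.inr (hr ▸ H.one_mem)))
    exact hL hg
  · have hrmem : r ∈ H ⊔ zpowers r := mem_sup_right (mem_zpowers r)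
    rintro (hg | hg)
    · exact mem_sup_left hg
    · exact (Subgroup.mul_mem_cancel_right _ hrmem).mp (mem_sup_left hg)

lemma exists_mem_iff_mem_or_mul_mem (hHK : IsComplement' H K) (hN : N.index = 2)
    (hK : ∀ k ∈ K, k ∉ N → k * k = 1) (hUN : U ≤ N) (hHU : H ⊓ N ≤ U)
    (hUK : Disjoint U (K ⊓ N)) (hUH : ¬ U ≤ H) :
    ∃ r ∈ K, r ∉ N ∧ ∀ x, x ∈ U ↔ x ∈ N ∧ (x ∈ H ∨ x * r ∈ H) := by
  have hfactor {x : G} (hxU : x ∈ U) (hxH : x ∉ H) :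
      ∃ h ∈ H, h ∉ N ∧ ∃ k ∈ K, k ∉ N ∧ h * k = x := by
    obtain ⟨⟨⟨h, hh⟩, ⟨k, hk⟩⟩, rfl⟩ := hHK.surjective x
    have hiff : h ∈ N ↔ k ∈ N := (mul_mem_iff_of_index_two hN).mp (hUN hxU)
    have hhN : h ∉ N := fun hhN => by
      have hkU : k ∈ U := (mul_mem_cancel_left (hHU ⟨hh, hhN⟩)).mp hxU
      have hk1 : k = 1 := disjoint_def.mp hUK hkU ⟨hk, hiff.mp hhN⟩
      exact hxH (by simpa [hk1] using hh)
    exact ⟨h, hh, hhN, k, hk, mt hiff.mpr hhN, rfl⟩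
  obtain ⟨u, hu, huH⟩ := SetLike.not_le_iff_exists.mp hUH
  obtain ⟨s, hs, hsN, r, hr, hrN, rfl⟩ := hfactor hu huH
  have hrr : r * r = 1 := hK r hr hrN
  have hmul_r {h : G} (hh : h ∈ H) (hhN : h ∉ N) : h * r ∈ U := by
    have hhs : h * s⁻¹ ∈ U := hHU ⟨H.mul_mem hh (H.inv_mem hs),
      (mul_mem_iff_of_index_two hN).mpr (iff_of_false hhN (by simpa using hsN))⟩
    simpa [mul_assoc] using U.mul_mem hhs hu
  refine ⟨r, hr, hrN, fun x => ⟨fun hx => ⟨hUN hx, or_iff_not_imp_left.mpr fun hxH => ?_⟩, ?_⟩⟩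
  · obtain ⟨h, hh, hhN, k, hk, -, rfl⟩ := hfactor hx hxH
    have hrk : r⁻¹ * k ∈ U := by
      simpa [mul_assoc] using U.mul_mem (U.inv_mem (hmul_r hh hhN)) hx
    have hk_eq : r = k := inv_mul_eq_one.mp <|
      disjoint_def.mp hUK hrk ⟨K.mul_mem (K.inv_mem hr) hk, hUN hrk⟩
    simpa [← hk_eq, mul_assoc, hrr] using hh
  · rintro ⟨hxN, hxH | hxr⟩
    · exact hHU ⟨hxH, hxN⟩
    · have hxrN : x * r ∉ N := fun h => hrN ((mul_mem_cancel_left hxN).mp h)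
      simpa [mul_assoc, hrr] using hmul_r hxr hxrN

lemma mul_mem_or_mul_mul_mem (hN : N.index = 2) {r : G} (hr : r * r = 1) (hrN : r ∉ N)
    (hU : ∀ x, x ∈ U ↔ x ∈ N ∧ (x ∈ H ∨ x * r ∈ H)) (hUH : ¬ U ≤ H) {h : G} (hh : h ∈ H) :
    r * h ∈ H ∨ r * h * r ∈ H := by
  have hr_inv : r⁻¹ = r := inv_eq_of_mul_eq_one_left hr
  by_cases hhN : h ∈ N
  · obtain ⟨u, hu, huH⟩ := SetLike.not_le_iff_exists.mp hUH
    have hur : u * r ∈ H := ((hU u).mp hu).2.resolve_left huH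
    have huh : u * h ∈ U := U.mul_mem hu ((hU h).mpr ⟨hhN, Or.inl hh⟩)
    have huhr : u * h * r ∈ H :=
      ((hU _).mp huh).2.resolve_left (mt (mul_mem_cancel_right hh).mp huH)
    right
    simpa [mul_assoc, hr_inv] using H.mul_mem (H.inv_mem hur) huhr
  · have hhr : h⁻¹ * r ∈ U := (hU _).mpr
      ⟨(mul_mem_iff_of_index_two hN).mpr (iff_of_false (by simpa using hhN) hrN),
        Or.inr (by simpa [mul_assoc, hr] using hh)⟩
    have hrh : r * h ∈ U := by simpa [hr_inv] using U.inv_mem hhr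
    exact ((hU _).mp hrh).2

theorem exists_isComplement'_inf (hHK : IsComplement' H K) (hN : N.index = 2)
    (hK : ∀ k ∈ K, k ∉ N → k * k = 1) (hUN : U ≤ N) (hHU : H ⊓ N ≤ U)
    (hUK : Disjoint U (K ⊓ N)) (hUH : ¬ U ≤ H) :
    ∃ V : Subgroup G, IsComplement' V (K ⊓ N) := by
  obtain ⟨r, hr, hrN, hU⟩ := exists_mem_iff_mem_or_mul_mem hHK hN hK hUN hHU hUK hUH
  have hrr : r * r = 1 := hK r hr hrN
  have hrH : ∀ h ∈ H, r * h ∈ H ∨ r * h * r ∈ H :=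
    fun h hh => mul_mem_or_mul_mul_mem hN hrr hrN hU hUH hh
  refine ⟨H ⊔ zpowers r, isComplement'_of_disjoint_and_mul_eq_univ ?_ ?_⟩
  · rw [disjoint_def]
    intro g hg hgKN
    obtain ⟨hgK, hgN⟩ := mem_inf.mp hgKN
    rcases (mem_sup_zpowers_iff hrr hrH).mp hg with hgH | hgr
    · exact disjoint_def.mp hHK.disjoint hgH hgK
    · have hgr_one : g * r = 1 := disjoint_def.mp hHK.disjoint hgr (K.mul_mem hgK hr)
      exact absurd ((mul_mem_cancel_left hgN).mp (hgr_one ▸ N.one_mem)) hrN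
  · refine Set.eq_univ_of_forall fun g => ?_
    obtain ⟨⟨⟨h, hh⟩, ⟨k, hk⟩⟩, rfl⟩ := hHK.surjective g
    by_cases hkN : k ∈ N
    · exact Set.mul_mem_mul (mem_sup_left hh) ⟨hk, hkN⟩
    · refine ⟨h * r, mul_mem (mem_sup_left hh) (mem_sup_right (mem_zpowers r)), r * k,
        ⟨K.mul_mem hr hk, (mul_mem_iff_of_index_two hN).mpr (iff_of_false hrN hkN)⟩, ?_⟩
      simp [mul_assoc, ← mul_assoc r r, hrr]

end Complement

lemma exists_hom_perm_int_eq_addRight {G : Type*} [Group G] {V : Subgroup G} {t : G}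
    (ht : ¬ IsOfFinOrder t) (hV : IsComplement' V (zpowers t)) :
    ∃ φ : G →* Equiv.Perm ℤ, φ t = Equiv.addRight 1 := by
  have hinj : Function.Injective fun k : ℤ => ((t ^ k : G) : G ⧸ V) := by
    intro a b hab
    have hmem : (t ^ a)⁻¹ * t ^ b ∈ V := QuotientGroup.eq.mp hab
    have hone : (t ^ a)⁻¹ * t ^ b = 1 := disjoint_def.mp hV.disjoint hmem
      (mul_mem (inv_mem (zpow_mem_zpowers t a)) (zpow_mem_zpowers t b))
    exact injective_zpow_iff_not_isOfFinOrder.mpr ht (inv_mul_eq_one.mp hone)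
  have hsurj : Function.Surjective fun k : ℤ => ((t ^ k : G) : G ⧸ V) := by
    intro q
    obtain ⟨g, rfl⟩ := QuotientGroup.mk_surjective q
    obtain ⟨⟨⟨_, k, rfl⟩, v⟩, rfl⟩ := hV.symm.surjective g
    exact ⟨k, (QuotientGroup.mk_mul_of_mem _ v.2).symm⟩
  let e : ℤ ≃ G ⧸ V := Equiv.ofBijective _ ⟨hinj, hsurj⟩
  refine ⟨e.symm.permCongrHom.toMonoidHom.comp (MulAction.toPermHom G (G ⧸ V)), ?_⟩
  ext k
  apply e.injective
  change e (e.symm (t • e k)) = e (k + 1)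
  rw [e.apply_symm_apply]
  exact congrArg QuotientGroup.mk (mul_self_zpow t k)

lemma not_forall_apply_sub_eq_sub_apply {f : ℤ → ℤ} (hinvol : Function.Involutive f)
    (hcube : ∀ k, f (f (f (k + 1) + 1) + 1) = k) (c : ℤ) : ¬ ∀ k, f (c - k) = c - f k := by
  intro hrefl
  have hrefl' {k l : ℤ} (h : k + l = c) : f k + f l = c := by
    rw [show k = c - l by omega, hrefl]
    omega
  obtain ⟨m, rfl | rfl⟩ := Int.even_or_odd' c
  · have hfix : f m = m := by have := hrefl' (show m + m = 2 * m by ring); omega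
    have hprev : f (f (m + 1) + 1) = m - 1 := by simpa [hfix] using hcube (m - 1)
    have hnext : f (m + 1) + 1 = f (m - 1) := by rw [← hprev, hinvol]
    have := hrefl' (show (m + 1) + (m - 1) = 2 * m by ring)
    omega
  · set b := f (m + 1)
    have hm : f m = 2 * m + 1 - b := by
      have := hrefl' (show m + (m + 1) = 2 * m + 1 by ring)
      omega
    have hb1 : f (b + 1) = 2 * m - b := by
      have : f (b + 1) + 1 = f m := by rw [← hcube m, hinvol]
      omega
    have hb2 : f (b + 2) = m := by
      have hcycle := hcube (2 * m - b - 1)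
      rw [sub_add_cancel, ← hb1, hinvol, add_assoc, one_add_one_eq_two] at hcycle
      have : f (b + 2) + 1 = f (2 * m - b - 1) := by rw [← hinvol (f (b + 2) + 1), hcycle, hb1]
      have := hrefl' (show (2 * m - b - 1) + (b + 2) = 2 * m + 1 by ring)
      omega
    have : b + 2 = f m := by rw [← hb2, hinvol]
    omega

section ModularGroup

lemma pr_neg_one : pr (-1) = 1 := (QuotientGroup.eq_one_iff _).mpr (mem_zpowers _)

lemma nu_mul_nu : nu * nu = 1 := by
  have h : nuGL * nuGL = 1 := by ext : 1; decide
  rw [nu, ← map_mul, h, map_one]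

lemma nu_inv : nu⁻¹ = nu := inv_eq_of_mul_eq_one_left nu_mul_nu

lemma omega_mul_omega : omega * omega = 1 := by
  have h : omegaGL * omegaGL = -1 := by ext : 1; decide
  rw [omega, ← map_mul, h, pr_neg_one]

lemma omega_mul_tau_pow_three : (omega * tau) ^ 3 = 1 := by
  have h : (omegaGL * tauGL) ^ 3 = -1 := by ext : 1; decide
  rw [omega, tau, ← map_mul, ← map_pow, h, pr_neg_one]

lemma nu_mul_tau_mul_nu : nu * tau * nu = tau⁻¹ := by
  have h : nuGL * tauGL * nuGL = tauGL⁻¹ := by ext : 1; decide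
  rw [nu, tau, ← map_mul, ← map_mul, h, map_inv]

lemma commute_nu_omega : Commute nu omega := by
  have h : nuGL * omegaGL = -1 * (omegaGL * nuGL) := by ext : 1; decide
  rw [commute_iff_eq, nu, omega, ← map_mul, h, map_mul, pr_neg_one, one_mul, map_mul]

lemma pr_mem_Msub_iff {g : GL2Z} : pr g ∈ Msub ↔ GeneralLinearGroup.det g = 1 := by
  have hker : pr.ker ≤ (GeneralLinearGroup.det (n := Fin 2) (R := ℤ)).ker := by
    rw [pr, QuotientGroup.ker_mk', pmI, zpowers_le, MonoidHom.mem_ker]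
    decide
  rw [← mem_comap, Msub, comap_map_eq_self hker, MonoidHom.mem_ker]

lemma tau_mem_Msub : tau ∈ Msub := pr_mem_Msub_iff.mpr (by decide)

lemma nu_notMem_Msub : nu ∉ Msub := pr_mem_Msub_iff.not.mpr (by decide)

lemma index_Msub : Msub.index = 2 := by
  rw [index_eq_two_iff]
  refine ⟨nu, fun b => ?_⟩
  obtain ⟨g, rfl⟩ := QuotientGroup.mk'_surjective pmI b
  have hnu : GeneralLinearGroup.det nuGL = -1 := by decide
  change Xor (pr g * pr nuGL ∈ Msub) (pr g ∈ Msub)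
  rw [← map_mul, pr_mem_Msub_iff, pr_mem_Msub_iff, map_mul, hnu]
  obtain hg | hg := Int.units_eq_one_or (GeneralLinearGroup.det g) <;> simp [hg, Xor]

lemma not_isOfFinOrder_tauGL : ¬ IsOfFinOrder tauGL := by
  have hpow (n : ℕ) : tauGL ^ n = GeneralLinearGroup.upperRightHom (n : ℤ) := by
    rw [← nsmul_one n, AddChar.map_nsmul_eq_pow]
    rfl
  rw [isOfFinOrder_iff_pow_eq_one]
  rintro ⟨n, hn, h⟩
  rw [hpow, ← AddChar.map_zero_eq_one GeneralLinearGroup.upperRightHom] at h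
  have hn_zero : (n : ℤ) = 0 := GeneralLinearGroup.injective_upperRightHom h
  omega

lemma not_isOfFinOrder_tau : ¬ IsOfFinOrder tau := by
  intro h
  obtain ⟨n, hn, hpow⟩ := isOfFinOrder_iff_pow_eq_one.mp h
  rw [tau, ← map_pow] at hpow
  obtain ⟨k, hk⟩ := mem_zpowers_iff.mp ((QuotientGroup.eq_one_iff (N := pmI) _).mp hpow)
  have hneg : IsOfFinOrder (-1 : GL2Z) := isOfFinOrder_iff_pow_eq_one.mpr ⟨2, by simp⟩
  exact not_isOfFinOrder_tauGL ((hk ▸ hneg.zpow : IsOfFinOrder (tauGL ^ n)).of_pow hn.ne')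

lemma nu_mul_mul_nu {t : Mhat} (ht : t ∈ zpowers tau) : nu * t * nu = t⁻¹ := by
  obtain ⟨n, rfl⟩ := mem_zpowers_iff.mp ht
  have hconj := conj_zpow (i := n) (a := nu) (b := tau)
  rwa [nu_inv, nu_mul_tau_mul_nu, _root_.inv_zpow, eq_comm] at hconj

lemma mem_That_iff {t : Mhat} : t ∈ That ↔ t ∈ zpowers tau ∨ t * nu ∈ zpowers tau := by
  have hThat : That = zpowers tau ⊔ zpowers nu := by
    rw [That, Set.insert_eq, Subgroup.closure_union, zpowers_eq_closure, zpowers_eq_closure]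
  rw [hThat]
  refine mem_sup_zpowers_iff nu_mul_nu fun t ht => Or.inr ?_
  exact (nu_mul_mul_nu ht).symm ▸ (zpowers tau).inv_mem ht

lemma That_inf_Msub : That ⊓ Msub = zpowers tau := by
  have hT : zpowers tau ≤ Msub := zpowers_le.mpr tau_mem_Msub
  refine le_antisymm ?_ (le_inf (fun t ht => mem_That_iff.mpr (Or.inl ht)) hT)
  intro t htThatM
  obtain ⟨ht, htM⟩ := mem_inf.mp htThatM
  exact (mem_That_iff.mp ht).resolve_right fun h =>
    nu_notMem_Msub ((mul_mem_cancel_left htM).mp (hT h))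

lemma mul_self_eq_one_of_mem_That {t : Mhat} (ht : t ∈ That) (htM : t ∉ Msub) : t * t = 1 := by
  have htnu : t * nu ∈ zpowers tau := (mem_That_iff.mp ht).resolve_left
    fun h => htM (zpowers_le.mpr tau_mem_Msub h)
  have hinv : nu * t = (t * nu)⁻¹ := by
    simpa [mul_assoc, nu_mul_nu] using nu_mul_mul_nu htnu
  rw [_root_.mul_inv_rev, nu_inv] at hinv
  exact mul_eq_one_iff_eq_inv.mpr (mul_left_cancel hinv)

lemma map_tau_ne_addRight_one (φ : Mhat →* Equiv.Perm ℤ) : φ tau ≠ Equiv.addRight 1 := by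
  intro hτ
  have htau (k : ℤ) : φ tau k = k + 1 := by simp [hτ]
  have hnu_succ (k : ℤ) : φ nu (k + 1) + 1 = φ nu k := by
    have hrel : tau * nu * tau = nu := by
      rw [mul_assoc, ← eq_inv_mul_iff_mul_eq, ← nu_mul_tau_mul_nu, mul_assoc, nu_mul_nu, mul_one]
    simpa [htau] using DFunLike.congr_fun (congrArg φ hrel) k
  have hnu (k : ℤ) : φ nu k = φ nu 0 - k := by
    induction k using Int.induction_on with
    | zero => simp
    | succ k ih => have := hnu_succ k; omega
    | pred k ih => have := hnu_succ (-k - 1); rw [sub_add_cancel] at this; omega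
  refine not_forall_apply_sub_eq_sub_apply (f := φ omega) (fun k => ?_) (fun k => ?_) (φ nu 0)
    fun k => ?_
  · simpa using DFunLike.congr_fun (congrArg φ omega_mul_omega) k
  · simpa [htau, _root_.pow_succ] using DFunLike.congr_fun (congrArg φ omega_mul_tau_pow_three) k
  · simpa [hnu k, hnu (φ omega k)] using DFunLike.congr_fun (congrArg φ commute_nu_omega.eq.symm) k

theorem not_isComplement'_zpowers_tau (V : Subgroup Mhat) : ¬ IsComplement' V (zpowers tau) := by
  intro hV
  obtain ⟨φ, hφ⟩ := exists_hom_perm_int_eq_addRight not_isOfFinOrder_tau hV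
  exact map_tau_ne_addRight_one φ hφ

lemma IsNeumann.isComplement' {S : Subgroup Mhat} (hS : IsNeumann S) : IsComplement' S That :=
  isComplement'_of_disjoint_and_mul_eq_univ (disjoint_iff.mpr hS.2) hS.1

lemma IsNeumann.isNonparabolic_inf_Msub {S : Subgroup Mhat} (hS : IsNeumann S) :
    IsNonparabolic (S ⊓ Msub) := by
  refine ⟨inf_le_right, ?_⟩
  rintro g ⟨hgS, -⟩ ⟨hg, h, -, n, hn⟩
  have hconj : h * tau ^ n * h⁻¹ = g := by rw [← hn]; group
  have hone : tau ^ n = 1 := eq_one_of_conj_mem_of_isComplement' hS.isComplement'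
    (mem_That_iff.mpr (Or.inl (zpow_mem_zpowers tau n))) (hconj ▸ hgS)
  exact hg (by rw [← hconj, hone]; group)

lemma IsNonparabolic.disjoint_zpowers_tau {U : Subgroup Mhat} (hU : IsNonparabolic U) :
    Disjoint U (zpowers tau) := by
  rw [disjoint_def]
  rintro _ hmem ⟨n, rfl⟩
  by_contra hne
  exact hU.2 _ hmem ⟨hne, 1, Msub.one_mem, n, by simp⟩

lemma IsNeumann.le_of_isNonparabolic {S U : Subgroup Mhat} (hS : IsNeumann S)
    (hU : IsNonparabolic U) (hSU : S ⊓ Msub ≤ U) : U ≤ S := by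
  by_contra hUS
  obtain ⟨V, hV⟩ := exists_isComplement'_inf hS.isComplement' index_Msub
    (fun _ => mul_self_eq_one_of_mem_That) hU.1 hSU
    (That_inf_Msub ▸ hU.disjoint_zpowers_tau) hUS
  exact not_isComplement'_zpowers_tau V (That_inf_Msub ▸ hV)

lemma IsNeumann.not_isNeumannM_inf_Msub {S : Subgroup Mhat} (hS : IsNeumann S)
    (hSM : ¬ S ≤ Msub) : ¬ IsNeumannM (S ⊓ Msub) := by
  rintro ⟨-, hmul, -⟩
  have hThatM : ¬ That ≤ Msub := fun h => nu_notMem_Msub (h (subset_closure (by simp)))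
  refine inf_mul_inf_ne_of_isComplement' hS.isComplement' index_Msub hSM hThatM ?_
  rwa [That_inf_Msub]

end ModularGroup

/-- If Ŝ is a Neumann subgroup of the extended modular group
M̂ = PGL(2,ℤ) not contained in the modular group M = PSL(2,ℤ), then S = Ŝ ∩ M
is a maximal nonparabolic subgroup of M which is not a Neumann subgroup of M. -/
theorem neumann_inter_modular_maximal_nonparabolic_not_neumann
    (Shat : Subgroup Mhat) (h1 : IsNeumann Shat) (h2 : ¬ Shat ≤ Msub) :
    IsMaximalNonparabolic (Shat ⊓ Msub) ∧ ¬ IsNeumannM (Shat ⊓ Msub) := by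
  refine ⟨⟨h1.isNonparabolic_inf_Msub, fun U hU hSU => ?_⟩, h1.not_isNeumannM_inf_Msub h2⟩
  have hUS : U ≤ Shat := h1.le_of_isNonparabolic hU hSU
  exact le_antisymm (le_inf hUS hU.1) hSU
end
end

section
/- If Ŝ is a Neumann subgroup of M̂ = PGL(2,ℤ) not contained in M = PSL(2,ℤ) and Ŝ has (k,l,m)-structure for k, l, m ∈ ℕ ∪ {∞}, then the subgroup S = Ŝ ∩ M has (2k, 2l, 2m−1)-structure. -/
open Matrix Pointwise

noncomputable section

/-- `G` is a free product of `k` groups of order 2, `l` groups of order 3 and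
`m` infinite cyclic groups (cardinalities measured in `ℕ∞`). -/
def HasKLMStructure (G : Type) [Group G] (k l m : ℕ∞) : Prop :=
  ∃ (ι : Type) (H : ι → Type) (inst : ∀ i, Group (H i)),
    letI := inst
    Nonempty (G ≃* Monoid.CoprodI H) ∧
    (∀ i, Nonempty (H i ≃* Multiplicative (ZMod 2)) ∨
      Nonempty (H i ≃* Multiplicative (ZMod 3)) ∨
      Nonempty (H i ≃* Multiplicative ℤ)) ∧
    {i | Nonempty (H i ≃* Multiplicative (ZMod 2))}.encard = k ∧
    {i | Nonempty (H i ≃* Multiplicative (ZMod 3))}.encard = l ∧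
    {i | Nonempty (H i ≃* Multiplicative ℤ)}.encard = m

/-!
The determinant of `M̂` restricts to a surjection `χ` from `Ŝ` onto `{±1}` with kernel `Ŝ ∩ M`.
An involution of `M̂` of determinant `-1` fixes a primitive vector of `ℤ²`, hence is conjugate into
`T̂`; since `Ŝ T̂ = M̂`, no nontrivial element of `Ŝ` is, so `χ` is trivial on all torsion.
Write `Ŝ = A ∗ F` with `A` a free product of groups of order 2 and 3 and `F` free. A generator
`x₀` of `F` has `χ x₀ = -1`, and multiplying the other generators by powers of `x₀` makes `χ`
trivial on them. Then `Ŝ = A' ∗ ⟨x₀⟩` with `χ` trivial on `A'`, and by the Reidemeister–Schreier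
argument the kernel is `A' ∗ x₀ A' x₀⁻¹ ∗ ⟨x₀²⟩`, with `2 (m - 1) + 1` infinite cyclic factors.
-/

open Monoid
open scoped Monoid.Coprod

theorem not_nonempty_mulEquiv_zmod (G : Type*) [Group G] [Infinite G] (n : ℕ) [NeZero n] :
    ¬ Nonempty (G ≃* Multiplicative (ZMod n)) := by
  rintro ⟨e⟩
  have : Finite G := Finite.of_equiv (ZMod n) (Multiplicative.ofAdd.trans e.symm.toEquiv)
  exact not_finite G

theorem nonempty_mulEquiv_int_of_finiteIndex (H : Subgroup (Multiplicative ℤ)) [H.FiniteIndex] :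
    Nonempty (H ≃* Multiplicative ℤ) := by
  have : Infinite H := by
    by_contra hH
    have : Finite H := not_infinite_iff_finite.1 hH
    have : Finite (Multiplicative ℤ) :=
      (Subgroup.finite_iff_finite_and_finiteIndex H).2 ⟨this, inferInstance⟩
    exact not_finite (Multiplicative ℤ)
  exact ⟨intCyclicMulEquiv.symm⟩

theorem encard_sum {α β : Type*} (s : Set (α ⊕ β)) :
    s.encard = (Sum.inl ⁻¹' s).encard + (Sum.inr ⁻¹' s).encard :=
  (ENat.card_congr Equiv.subtypeSum).trans (ENat.card_sum _ _)

theorem card_subtype_ne_add_one {X : Type*} (x₀ : X) :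
    ENat.card {x // x ≠ x₀} + 1 = ENat.card X := by
  classical
  have e : {x // x ≠ x₀} ⊕ Unit ≃ X :=
    (Equiv.optionEquivSumPUnit _).symm.trans (Equiv.optionSubtypeNe x₀)
  simpa using ENat.card_congr e

theorem enat_two_mul_add_one_sub_one (n : ℕ∞) : 2 * (n + 1) - 1 = 2 * n + 1 := by
  have h : 2 * (n + 1) = 2 * n + 1 + 1 := by ring
  rw [h, (ENat.addLECancellable_of_ne_top ENat.one_ne_top).add_tsub_cancel_right]

/-- The isomorphism `ker (ψ ∘ e) ≃* ker ψ` induced by a group isomorphism `e`. -/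
def kerCompEquiv {G G' Q : Type*} [Group G] [Group G'] [Group Q] (ψ : G' →* Q) (e : G ≃* G') :
    (ψ.comp e.toMonoidHom).ker ≃* ψ.ker :=
  (e.subgroupMap _).trans <| MulEquiv.subgroupCongr <| by
    ext x
    simp [MonoidHom.mem_ker, Subgroup.map_equiv_eq_comap_symm]

/-! ### Free products -/

section FreeProductEquiv

variable {ι : Type*}

/-- Factorwise isomorphism of free products. -/
def coprodICongr {M N : ι → Type*} [∀ i, Monoid (M i)] [∀ i, Monoid (N i)]
    (e : ∀ i, M i ≃* N i) : CoprodI M ≃* CoprodI N :=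
  MonoidHom.toMulEquiv
    (CoprodI.lift fun i => CoprodI.of.comp (e i).toMonoidHom)
    (CoprodI.lift fun i => CoprodI.of.comp (e i).symm.toMonoidHom)
    (by ext; simp) (by ext; simp)

open Classical in
/-- Splitting a free product according to a predicate on the index type. -/
def coprodISubtypeEquiv (M : ι → Type*) [∀ i, Monoid (M i)] (p : ι → Prop) :
    CoprodI M ≃* (CoprodI fun i : {i // p i} => M i) ∗ (CoprodI fun i : {i // ¬ p i} => M i) :=
  MonoidHom.toMulEquiv
    (CoprodI.lift fun i =>
      if hi : p i then Coprod.inl.comp (CoprodI.of (M := fun i : {i // p i} => M i) (i := ⟨i, hi⟩))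
      else Coprod.inr.comp (CoprodI.of (M := fun i : {i // ¬ p i} => M i) (i := ⟨i, hi⟩)))
    (Coprod.lift (CoprodI.lift fun i => CoprodI.of) (CoprodI.lift fun i => CoprodI.of))
    (by ext i; by_cases hi : p i <;> simp [hi])
    (by ext i <;> simp [i.2])

/-- A free product over a disjoint union is the free product of the two partial products. -/
def coprodISumEquiv {κ : Type*} (M : ι ⊕ κ → Type*) [∀ x, Monoid (M x)] :
    CoprodI M ≃* (CoprodI fun i => M (.inl i)) ∗ (CoprodI fun j => M (.inr j)) :=
  MonoidHom.toMulEquiv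
    (CoprodI.lift fun x => match x with
      | .inl i => Coprod.inl.comp (CoprodI.of (M := fun i => M (.inl i)) (i := i))
      | .inr j => Coprod.inr.comp (CoprodI.of (M := fun j => M (.inr j)) (i := j)))
    (Coprod.lift (CoprodI.lift fun i => CoprodI.of) (CoprodI.lift fun j => CoprodI.of))
    (by ext (i | j) <;> simp)
    (by ext <;> simp)

/-- The free product of `κ` copies of a free product, with a single index type. -/
def coprodIProdEquiv (κ : Type*) (M : ι → Type*) [∀ i, Monoid (M i)] :
    (CoprodI fun p : κ × ι => M p.2) ≃* CoprodI fun _ : κ => CoprodI M :=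
  MonoidHom.toMulEquiv
    (CoprodI.lift fun p => (CoprodI.of (i := p.1)).comp CoprodI.of)
    (CoprodI.lift fun k => CoprodI.lift fun i =>
      CoprodI.of (M := fun p : κ × ι => M p.2) (i := (k, i)))
    (by ext; simp)
    (by ext; simp)

/-- The free group on `X` as a free product of infinite cyclic groups. -/
def coprodIIntEquivFreeGroup (X : Type*) :
    (CoprodI fun _ : X => Multiplicative ℤ) ≃* FreeGroup X :=
  (coprodICongr fun _ => (FreeGroup.mulEquivIntOfUnique (α := Unit)).symm).trans
    freeGroupEquivCoprodI.symm

end FreeProductEquiv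

open Classical in
/-- The change of basis `x ↦ x * x₀ ^ c x` (`x ≠ x₀`) of a free group, followed by splitting off
the cyclic factor generated by `x₀`. -/
def freeGroupShearEquiv {X : Type*} (x₀ : X) (c : X → ℤ) :
    FreeGroup X ≃* FreeGroup {x // x ≠ x₀} ∗ Multiplicative ℤ :=
  MonoidHom.toMulEquiv
    (FreeGroup.lift fun x =>
      if hx : x = x₀ then .inr (.ofAdd 1)
      else .inl (FreeGroup.of ⟨x, hx⟩) * .inr (.ofAdd (c x)))
    (Coprod.lift (FreeGroup.lift fun x => .of x.1 * (.of x₀ ^ c x)⁻¹) (zpowersHom _ (.of x₀)))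
    (by
      ext x
      by_cases hx : x = x₀ <;> simp [hx])
    (by
      ext x
      · have h (n : ℤ) : (Coprod.inr (.ofAdd 1) : FreeGroup {x // x ≠ x₀} ∗ Multiplicative ℤ) ^ n =
            .inr (.ofAdd n) := by
          rw [← map_zpow, ← ofAdd_zsmul, smul_eq_mul, mul_one]
        simp [x.2, h]
      · simp)

theorem exists_mulEquiv_lift_one_comp_eq {X Q : Type*} [Group Q] (ψ : FreeGroup X →* Q) (x₀ : X)
    (h : ∀ q, q ∈ Subgroup.zpowers (ψ (.of x₀))) :
    ∃ e : FreeGroup X ≃* FreeGroup {x // x ≠ x₀} ∗ Multiplicative ℤ,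
      (Coprod.lift 1 (zpowersHom Q (ψ (.of x₀)))).comp e.toMonoidHom = ψ := by
  choose c hc using fun x => Subgroup.mem_zpowers_iff.1 (h (ψ (.of x)))
  refine ⟨freeGroupShearEquiv x₀ c, FreeGroup.ext_hom _ _ fun x => ?_⟩
  by_cases hx : x = x₀ <;> simp [freeGroupShearEquiv, hx, hc]

theorem lift_one_comp_coprodAssoc_symm {M N P Q : Type*} [Monoid M] [Monoid N] [Monoid P]
    [Monoid Q] (φ : P →* Q) :
    (Coprod.lift 1 φ).comp (MulEquiv.coprodAssoc M N P).symm.toMonoidHom =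
      Coprod.lift 1 (Coprod.lift 1 φ) := by
  ext <;> simp

theorem exists_mulEquiv_coprod_int_lift_comp_eq {X Q : Type*} (T : Type*) [Group T] [Group Q]
    (ψ : FreeGroup X →* Q) (x₀ : X) (h : ∀ q, q ∈ Subgroup.zpowers (ψ (.of x₀))) :
    ∃ e : T ∗ FreeGroup X ≃* (T ∗ FreeGroup {x // x ≠ x₀}) ∗ Multiplicative ℤ,
      (Coprod.lift 1 (zpowersHom Q (ψ (.of x₀)))).comp e.toMonoidHom = Coprod.lift 1 ψ := by
  obtain ⟨shear, h_shear⟩ := exists_mulEquiv_lift_one_comp_eq ψ x₀ h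
  generalize zpowersHom Q (ψ (.of x₀)) = φ at h_shear ⊢
  subst h_shear
  refine ⟨((MulEquiv.refl T).coprodCongr shear).trans (MulEquiv.coprodAssoc ..).symm,
    Coprod.hom_ext (by ext; simp) ?_⟩
  ext x
  simpa using DFunLike.congr_fun (lift_one_comp_coprodAssoc_symm φ) (.inr (shear (.of x)))

/-! ### The kernel of a homomorphism that is trivial on a free factor -/

/-- The free product `(∗_Q A) ∗ ker φ`, which models the kernel of `Coprod.lift 1 φ : A ∗ B →* Q`
when `φ` is surjective. -/
abbrev CoprodKerModel (A : Type*) {B Q : Type*} [Group A] [Group B] [Group Q] (φ : B →* Q) :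
    Type _ :=
  (CoprodI fun _ : Q => A) ∗ φ.ker

namespace CoprodKerModel

variable {A B Q : Type*} [Group A] [Group B] [Group Q] {φ : B →* Q} {s : Q → B}

/-- The Reidemeister–Schreier cocycle of `φ` for the section `s`: multiplication by `b⁻¹` takes the
coset representative `s q` to the representative of `(φ b)⁻¹ * q`, up to `cocycle hs b q`. -/
def cocycle (hs : ∀ q, φ (s q) = q) (b : B) (q : Q) : φ.ker :=
  ⟨(s q)⁻¹ * b * s ((φ b)⁻¹ * q), by simp [MonoidHom.mem_ker, hs]⟩

variable (hs : ∀ q, φ (s q) = q)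

lemma cocycle_one (q : Q) : cocycle hs 1 q = 1 := by simp [cocycle]

lemma cocycle_mul (b b' : B) (q : Q) :
    cocycle hs (b * b') q = cocycle hs b q * cocycle hs b' ((φ b)⁻¹ * q) := by
  simp [cocycle, mul_assoc]

lemma cocycle_section_inv (h1 : s 1 = 1) (q : Q) : cocycle hs (s q)⁻¹ 1 = 1 := by
  simp [cocycle, hs, h1]

lemma cocycle_section (h1 : s 1 = 1) (q : Q) : cocycle hs (s q) q = 1 := by
  simp [cocycle, hs, h1]

lemma cocycle_coe_one (h1 : s 1 = 1) (b : φ.ker) : cocycle hs (b : B) 1 = b := by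
  simp [cocycle, h1, MonoidHom.mem_ker.1 b.2]

variable (A) in
/-- The Kaloujnine–Krasner homomorphism to the wreath product with `Q`. The coordinate at `1` of
its base component restricts to a homomorphism on the kernel. -/
def toWreath : A ∗ B →* CoprodKerModel A φ ≀ᵣ Q :=
  Coprod.lift
    { toFun a := ⟨fun q => .inl (CoprodI.of (i := q) a), 1⟩
      map_one' := by ext <;> simp
      map_mul' a a' := by ext <;> simp }
    { toFun b := ⟨fun q => .inr (cocycle hs b q), φ b⟩
      map_one' := by ext <;> simp [cocycle_one]
      map_mul' b b' := by ext <;> simp [cocycle_mul] }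

lemma toWreath_inl (a : A) :
    toWreath A hs (.inl a) = ⟨fun q => .inl (CoprodI.of (i := q) a), 1⟩ :=
  rfl

lemma toWreath_inr (b : B) :
    toWreath A hs (.inr b) = ⟨fun q => .inr (cocycle hs b q), φ b⟩ :=
  rfl

lemma toWreath_right (g : A ∗ B) : (toWreath A hs g).right = Coprod.lift 1 φ g := by
  have : RegularWreathProduct.rightHom.comp (toWreath A hs) = Coprod.lift 1 φ :=
    Coprod.hom_ext rfl rfl
  exact DFunLike.congr_fun this g

variable (A φ s) in
/-- The inclusion of the kernel model in `A ∗ B`: the copy of `A` indexed by `q` is conjugated by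
`(s q)⁻¹`. -/
def toCoprod : CoprodKerModel A φ →* A ∗ B :=
  Coprod.lift (CoprodI.lift fun q => (MulAut.conj (.inr (s q)⁻¹)).toMonoidHom.comp Coprod.inl)
    (Coprod.inr.comp φ.ker.subtype)

lemma toCoprod_toWreath_left (g : A ∗ B) (q : Q) :
    toCoprod A φ s ((toWreath A hs g).left q) =
      .inr (s q)⁻¹ * g * .inr (s ((Coprod.lift 1 φ g)⁻¹ * q)) := by
  induction g using Coprod.induction_on generalizing q with
  | inl a => simp [toWreath_inl, toCoprod]
  | inr b => simp [toWreath_inr, toCoprod, cocycle]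
  | mul g g' hg hg' => simp [toWreath_right, hg, hg', mul_assoc]

lemma toCoprod_mem_ker (x : CoprodKerModel A φ) :
    toCoprod A φ s x ∈ (Coprod.lift 1 φ : A ∗ B →* Q).ker := by
  have : (Coprod.lift 1 φ).comp (toCoprod A φ s) = 1 := by
    ext x
    · simp [toCoprod]
    · simpa [toCoprod] using MonoidHom.mem_ker.1 x.2
  exact DFunLike.congr_fun this x

variable (A) in
/-- The coordinate at `1` of `toWreath`, a homomorphism on the kernel. -/
def ofKer : (Coprod.lift 1 φ : A ∗ B →* Q).ker →* CoprodKerModel A φ where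
  toFun g := (toWreath A hs g).left 1
  map_one' := by simp
  map_mul' g g' := by simp [toWreath_right, MonoidHom.mem_ker.1 g.2]

variable (A) in
/-- The isomorphism of the kernel with its model, for a section `s` normalized by `s 1 = 1`. -/
def kerLiftOneEquiv (h1 : s 1 = 1) : (Coprod.lift 1 φ : A ∗ B →* Q).ker ≃* CoprodKerModel A φ :=
  MonoidHom.toMulEquiv (ofKer A hs) ((toCoprod A φ s).codRestrict _ toCoprod_mem_ker)
    (by
      ext g
      simp [ofKer, toCoprod_toWreath_left, h1, MonoidHom.mem_ker.1 g.2])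
    (by
      ext x
      · simp [ofKer, toWreath_inl, toWreath_inr, toCoprod, hs, -map_inv, ← map_inv,
          cocycle_section hs h1, cocycle_section_inv hs h1]
      · simp [ofKer, toWreath_inr, toCoprod, cocycle_coe_one hs h1])

theorem nonempty_ker_lift_one_mulEquiv (A : Type*) [Group A] (hφ : Function.Surjective φ) :
    Nonempty ((Coprod.lift 1 φ : A ∗ B →* Q).ker ≃* CoprodKerModel A φ) := by
  classical
  let s : Q → B := Function.update (Function.surjInv hφ) 1 1
  have hs (q : Q) : φ (s q) = q := by
    obtain rfl | hq := eq_or_ne q 1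
    · simp [s]
    · simp [s, hq, Function.surjInv_eq hφ]
  exact ⟨kerLiftOneEquiv A hs (by simp [s])⟩

end CoprodKerModel

/-! ### Free products of groups of order 2, of order 3 and infinite cyclic -/

namespace HasKLMStructure

variable {G G' : Type} [Group G] [Group G'] {k l m k' l' m' : ℕ∞}

lemma of_mulEquiv (e : G ≃* G') (h : HasKLMStructure G k l m) : HasKLMStructure G' k l m := by
  obtain ⟨ι, H, _, ⟨φ⟩, hH⟩ := h
  exact ⟨ι, H, _, ⟨e.symm.trans φ⟩, hH⟩

lemma coprod (h : HasKLMStructure G k l m) (h' : HasKLMStructure G' k' l' m') :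
    HasKLMStructure (G ∗ G') (k + k') (l + l') (m + m') := by
  obtain ⟨ι, H, _, ⟨φ⟩, hH, rfl, rfl, rfl⟩ := h
  obtain ⟨κ, H', _, ⟨φ'⟩, hH', rfl, rfl, rfl⟩ := h'
  let (x : ι ⊕ κ) : Group (Sum.elim H H' x) := match x with
    | .inl i => inferInstanceAs (Group (H i))
    | .inr j => inferInstanceAs (Group (H' j))
  exact ⟨ι ⊕ κ, Sum.elim H H', inferInstance,
    ⟨(φ.coprodCongr φ').trans (coprodISumEquiv (Sum.elim H H')).symm⟩, Sum.rec hH hH',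
    encard_sum _, encard_sum _, encard_sum _⟩

lemma coprodI_const (Q : Type) (h : HasKLMStructure G k l m) :
    HasKLMStructure (CoprodI fun _ : Q => G)
      (ENat.card Q * k) (ENat.card Q * l) (ENat.card Q * m) := by
  obtain ⟨ι, H, _, ⟨φ⟩, hH, rfl, rfl, rfl⟩ := h
  simp only [← Set.encard_univ, ← Set.encard_prod]
  refine ⟨Q × ι, fun p => H p.2, inferInstance,
    ⟨(coprodICongr fun _ => φ).trans (coprodIProdEquiv Q H).symm⟩, fun p => hH p.2, ?_, ?_, ?_⟩
  all_goals congr 1; ext; simp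

lemma int : HasKLMStructure (Multiplicative ℤ) 0 0 1 := by
  have e : Multiplicative ℤ ≃* CoprodI fun _ : Unit => Multiplicative ℤ :=
    FreeGroup.mulEquivIntOfUnique.symm.trans (coprodIIntEquivFreeGroup Unit).symm
  refine ⟨Unit, fun _ => Multiplicative ℤ, inferInstance, ⟨e⟩, fun _ => .inr (.inr ⟨.refl _⟩),
    ?_, ?_, ?_⟩
  · simp only [not_nonempty_mulEquiv_zmod, Set.ofPred_false, Set.encard_empty]
  · simp only [not_nonempty_mulEquiv_zmod, Set.ofPred_false, Set.encard_empty]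
  · have : Nonempty (Multiplicative ℤ ≃* Multiplicative ℤ) := ⟨.refl _⟩
    simp [this]

lemma freeGroup (X : Type) : HasKLMStructure (FreeGroup X) 0 0 (ENat.card X) := by
  simpa using (int.coprodI_const X).of_mulEquiv (coprodIIntEquivFreeGroup X)

lemma exists_mulEquiv_coprod_freeGroup (h : HasKLMStructure G k l m) :
    ∃ (T : Type) (_ : Group T) (X : Type), Nonempty (G ≃* T ∗ FreeGroup X) ∧
      HasKLMStructure T k l 0 ∧ ENat.card X = m := by
  obtain ⟨ι, H, _, ⟨φ⟩, hH, rfl, rfl, rfl⟩ := h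
  let p i := Nonempty (H i ≃* Multiplicative ℤ)
  have e : (CoprodI fun i : {i // p i} => H i) ≃* FreeGroup {i // p i} :=
    (coprodICongr fun i => i.2.some).trans (coprodIIntEquivFreeGroup _)
  have encard_torsion (n : ℕ) [NeZero n] :
      {i : {i // ¬ p i} | Nonempty (H i ≃* Multiplicative (ZMod n))}.encard =
        {i | Nonempty (H i ≃* Multiplicative (ZMod n))}.encard := by
    refine Set.encard_preimage_of_injective_subset_range
      (t := {i | Nonempty (H i ≃* Multiplicative (ZMod n))}) Subtype.val_injective fun i hi => ?_
    refine ⟨⟨i, fun ⟨f⟩ => ?_⟩, rfl⟩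
    have : Infinite (H i) := f.toEquiv.infinite_iff.2 inferInstance
    exact not_nonempty_mulEquiv_zmod (H i) n hi
  refine ⟨CoprodI fun i : {i // ¬ p i} => H i, inferInstance, {i // p i},
    ⟨φ.trans ((coprodISubtypeEquiv H p).trans
      ((e.coprodCongr (.refl _)).trans (MulEquiv.coprodComm _ _)))⟩,
    ⟨_, _, inferInstance, ⟨.refl _⟩, fun i => hH i, encard_torsion 2, encard_torsion 3, ?_⟩, rfl⟩
  exact Set.encard_eq_zero.2 (Set.eq_empty_of_forall_notMem fun i => i.2)

lemma hom_eq_one (h : HasKLMStructure G k l 0) {Q : Type*} [Monoid Q] (χ : G →* Q)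
    (hχ : ∀ g, g ^ 2 = 1 ∨ g ^ 3 = 1 → χ g = 1) : χ = 1 := by
  obtain ⟨ι, H, _, ⟨φ⟩, hH, -, -, hm⟩ := h
  have pow_eq_one {n : ℕ} {i : ι} (e : H i ≃* Multiplicative (ZMod n)) (x : H i) : x ^ n = 1 := by
    apply e.injective
    rw [map_pow, map_one]
    exact Multiplicative.toAdd.injective (by simp)
  suffices χ.comp φ.symm.toMonoidHom = 1 by
    ext g
    simpa using DFunLike.congr_fun this (φ g)
  ext i x
  refine hχ _ ?_
  obtain ⟨⟨e⟩⟩ | ⟨⟨e⟩⟩ | hi := hH i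
  · left; simp [← map_pow, pow_eq_one e]
  · right; simp [← map_pow, pow_eq_one e]
  · exact (Set.encard_eq_zero.1 hm ▸ hi : i ∈ (∅ : Set ι)).elim

lemma exists_mulEquiv_coprod_int (h : HasKLMStructure G k l m) {Q : Type*} [Group Q]
    (hQ : (Nat.card Q).Prime) {χ : G →* Q} (hχ : χ ≠ 1)
    (hχ_torsion : ∀ g, g ^ 2 = 1 ∨ g ^ 3 = 1 → χ g = 1) :
    ∃ (T : Type) (_ : Group T) (n : ℕ∞) (φ : Multiplicative ℤ →* Q)
      (e : G ≃* T ∗ Multiplicative ℤ), HasKLMStructure T k l n ∧ m = n + 1 ∧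
        Function.Surjective φ ∧ (Coprod.lift 1 φ).comp e.toMonoidHom = χ := by
  obtain ⟨T, _, X, ⟨e⟩, hT, rfl⟩ := h.exists_mulEquiv_coprod_freeGroup
  obtain ⟨ψ, rfl⟩ : ∃ ψ : FreeGroup X →* Q, (Coprod.lift 1 ψ).comp e.toMonoidHom = χ := by
    refine ⟨(χ.comp e.symm.toMonoidHom).comp Coprod.inr, ?_⟩
    have χ_inl : (χ.comp e.symm.toMonoidHom).comp Coprod.inl = 1 :=
      hT.hom_eq_one _ fun t ht => hχ_torsion _ <|
        ht.imp (fun h => by simp [← map_pow, h]) (fun h => by simp [← map_pow, h])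
    rw [← χ_inl, ← Coprod.lift_unique rfl rfl]
    ext; simp
  obtain ⟨x₀, hx₀⟩ : ∃ x, ψ (.of x) ≠ 1 := by
    by_contra! H
    obtain rfl : ψ = 1 := FreeGroup.ext_hom _ _ H
    have h_one : (Coprod.lift 1 1 : T ∗ FreeGroup X →* Q) = 1 := Coprod.hom_ext rfl rfl
    exact hχ (by rw [h_one, MonoidHom.one_comp])
  have : Fact (Nat.card Q).Prime := ⟨hQ⟩
  have gen (q : Q) : q ∈ Subgroup.zpowers (ψ (.of x₀)) := mem_zpowers_of_prime_card rfl hx₀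
  obtain ⟨e', he'⟩ := exists_mulEquiv_coprod_int_lift_comp_eq T ψ x₀ gen
  exact ⟨T ∗ FreeGroup {x // x ≠ x₀}, inferInstance, _, zpowersHom Q (ψ (.of x₀)), e.trans e',
    by simpa using hT.coprod (freeGroup {x // x ≠ x₀}), (card_subtype_ne_add_one x₀).symm,
    fun q => Subgroup.mem_zpowers_iff.1 (gen q), by rw [← he']; rfl⟩

lemma ker_lift_one_int {T Q : Type} [Group T] [Group Q] [Finite Q] (h : HasKLMStructure T k l m)
    {φ : Multiplicative ℤ →* Q} (hφ : Function.Surjective φ) :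
    HasKLMStructure (Coprod.lift 1 φ : T ∗ Multiplicative ℤ →* Q).ker
      (Nat.card Q * k) (Nat.card Q * l) (Nat.card Q * m + 1) := by
  obtain ⟨e⟩ := CoprodKerModel.nonempty_ker_lift_one_mulEquiv T hφ
  obtain ⟨e'⟩ := nonempty_mulEquiv_int_of_finiteIndex φ.ker
  simpa [ENat.card_eq_coe_natCard] using
    ((h.coprodI_const Q).coprod int).of_mulEquiv (e.trans (.coprodCongr (.refl _) e')).symm

theorem ker_of_prime_card (h : HasKLMStructure G k l m) {Q : Type} [Group Q]
    (hQ : (Nat.card Q).Prime) {χ : G →* Q} (hχ : χ ≠ 1)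
    (hχ_torsion : ∀ g, g ^ 2 = 1 ∨ g ^ 3 = 1 → χ g = 1) :
    ∃ n, m = n + 1 ∧
      HasKLMStructure χ.ker (Nat.card Q * k) (Nat.card Q * l) (Nat.card Q * n + 1) := by
  obtain ⟨T, _, n, φ, e, hT, hm, hφ, rfl⟩ := h.exists_mulEquiv_coprod_int hQ hχ hχ_torsion
  have : Finite Q := Nat.finite_of_card_ne_zero hQ.ne_zero
  exact ⟨n, hm, (hT.ker_lift_one_int hφ).of_mulEquiv (kerCompEquiv _ e).symm⟩

end HasKLMStructure

/-! ### The extended modular group -/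

/-- The determinant on `PGL(2,ℤ)`, well defined because `det (-1) = 1`. -/
def detHat : Mhat →* ℤˣ :=
  QuotientGroup.lift pmI Matrix.GeneralLinearGroup.det <| by
    rw [pmI, Subgroup.zpowers_le]
    ext
    simp [Matrix.det_fin_two]

lemma pr_surjective : Function.Surjective pr := QuotientGroup.mk'_surjective pmI

lemma ker_detHat : detHat.ker = Msub := by
  ext x
  constructor
  · obtain ⟨g, rfl⟩ := pr_surjective x
    exact fun hg => ⟨g, hg, rfl⟩
  · rintro ⟨g, hg, rfl⟩
    exact hg

lemma pr_eq_one_iff {g : GL2Z} : pr g = 1 ↔ g = 1 ∨ g = -1 := by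
  have : pr g = 1 ↔ g ∈ pmI := QuotientGroup.eq_one_iff g
  rw [this, pmI, Subgroup.mem_zpowers_iff]
  constructor
  · rintro ⟨k, rfl⟩
    exact k.even_or_odd.imp Even.neg_one_zpow Odd.neg_one_zpow
  · rintro (rfl | rfl)
    · exact ⟨0, zpow_zero _⟩
    · exact ⟨1, zpow_one _⟩

lemma pr_neg (g : GL2Z) : pr (-g) = pr g := by
  rw [← neg_one_mul, map_mul, pr_eq_one_iff.2 (.inr rfl), one_mul]

lemma coe_tauGL_zpow (n : ℤ) :
    ((tauGL ^ n : GL2Z) : Matrix (Fin 2) (Fin 2) ℤ) = !![1, n; 0, 1] := by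
  have h : tauGL = Matrix.SpecialLinearGroup.toGL ModularGroup.T := by ext i j; rfl
  rw [h, ← map_zpow]
  exact ModularGroup.coe_T_zpow n

lemma pr_mem_That_of_apply_one_one_eq_one {g : GL2Z} (h₁₀ : g 1 0 = 0) (h₁₁ : g 1 1 = 1) :
    pr g ∈ That := by
  have h_tau : pr (tauGL ^ g 0 1) ∈ That := by
    rw [map_zpow]
    exact zpow_mem (Subgroup.subset_closure (.inl rfl)) _
  have h_nu : pr nuGL ∈ That := Subgroup.subset_closure (.inr rfl)
  have h₀₀ : IsUnit (g 0 0) := by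
    simpa [Matrix.det_fin_two, h₁₀, h₁₁] using g.isUnit.map Matrix.detMonoidHom
  obtain h | h := Int.isUnit_iff.1 h₀₀
  · convert h_tau
    ext i j
    rw [coe_tauGL_zpow]
    fin_cases i <;> fin_cases j <;> simp [*]
  · convert mul_mem h_tau h_nu
    rw [← map_mul]
    congr 1
    ext i j
    rw [Units.val_mul, coe_tauGL_zpow]
    fin_cases i <;> fin_cases j <;> simp [nuGL, *]

lemma pr_mem_That {g : GL2Z} (h : g 1 0 = 0) : pr g ∈ That := by
  have h₁₁ : IsUnit (g 1 1) := by
    have := g.isUnit.map Matrix.detMonoidHom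
    rw [Matrix.coe_detMonoidHom, Matrix.det_fin_two, h] at this
    exact isUnit_of_mul_isUnit_right (by simpa using this)
  obtain h₁₁ | h₁₁ := Int.isUnit_iff.1 h₁₁
  · exact pr_mem_That_of_apply_one_one_eq_one h h₁₁
  · rw [← pr_neg]
    exact pr_mem_That_of_apply_one_one_eq_one (by simp [h]) (by simp [h₁₁])

lemma exists_isCoprime_mulVec_eq {A : Matrix (Fin 2) (Fin 2) ℤ} {w : Fin 2 → ℤ} (hw : w ≠ 0)
    (hA : A *ᵥ w = w) : ∃ v : Fin 2 → ℤ, IsCoprime (v 0) (v 1) ∧ A *ᵥ v = v := by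
  have hd : 0 < Int.gcd (w 0) (w 1) := by
    rw [Int.gcd_pos_iff]
    by_contra! h
    exact hw (by ext i; fin_cases i; exacts [h.1, h.2])
  obtain ⟨p, r, hpr, hp, hr⟩ := Int.exists_gcd_one hd
  have hw' : w = (Int.gcd (w 0) (w 1) : ℤ) • ![p, r] := by
    ext i; fin_cases i
    · simpa [mul_comm] using hp
    · simpa [mul_comm] using hr
  refine ⟨![p, r], Int.isCoprime_iff_gcd_eq_one.2 hpr, ?_⟩
  rw [hw', Matrix.mulVec_smul] at hA
  exact smul_right_injective _ (by exact_mod_cast hd.ne') hA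

lemma exists_conj_apply_one_zero_eq_zero {g : GL2Z} {w : Fin 2 → ℤ} (hw : w ≠ 0)
    (hg : (g : Matrix (Fin 2) (Fin 2) ℤ) *ᵥ w = w) : ∃ h : GL2Z, (h⁻¹ * g * h) 1 0 = 0 := by
  obtain ⟨v, hv, hgv⟩ := exists_isCoprime_mulVec_eq hw hg
  obtain ⟨h, h_col⟩ : ∃ h : GL2Z, h.1 *ᵥ Pi.single 0 1 = v := by
    obtain ⟨h, h₀, h₁⟩ := hv.exists_SL2_col 0
    refine ⟨h, ?_⟩
    rw [Matrix.mulVec_single_one]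
    ext i; fin_cases i; exacts [h₀, h₁]
  refine ⟨h, ?_⟩
  have : ((h⁻¹ * g * h : GL2Z) : Matrix (Fin 2) (Fin 2) ℤ) *ᵥ Pi.single 0 1 = Pi.single 0 1 := by
    rw [Units.val_mul, Units.val_mul, ← Matrix.mulVec_mulVec, h_col, ← Matrix.mulVec_mulVec, hgv,
      ← h_col, Matrix.mulVec_mulVec, ← Units.val_mul, inv_mul_cancel, Units.val_one,
      Matrix.one_mulVec]
  simpa using congrFun this 1

lemma trace_eq_zero_of_pr_sq_eq_one {g : GL2Z} (hg : pr g ^ 2 = 1) (hdet : g.1.det = -1) :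
    g.1.trace = 0 := by
  rw [Matrix.det_fin_two] at hdet
  rw [Matrix.trace_fin_two]
  rw [← map_pow, pr_eq_one_iff, sq] at hg
  have h_sq : (g.1 * g.1) 0 1 = 0 := by
    rw [← Units.val_mul]
    obtain h | h := hg <;> simp [h]
  rw [Matrix.mul_apply, Fin.sum_univ_two] at h_sq
  have h₀₁ : g 0 1 * (g 0 0 + g 1 1) = 0 := by linear_combination h_sq
  obtain h | h := mul_eq_zero.1 h₀₁
  · rw [h, zero_mul, sub_zero] at hdet
    obtain ⟨h, h'⟩ | ⟨h, h'⟩ := Int.mul_eq_neg_one_iff_eq_one_or_neg_one.1 hdet <;> simp [*]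
  · exact h

lemma exists_conj_mem_That {x : Mhat} (hx : x ^ 2 = 1) (hdet : detHat x ≠ 1) :
    ∃ y, y⁻¹ * x * y ∈ That := by
  obtain ⟨g, rfl⟩ := pr_surjective x
  have hdet : g.1.det = -1 := congrArg Units.val ((Int.units_eq_one_or _).resolve_left hdet)
  have hfix : (g.1 - 1).det = 0 := by
    have := trace_eq_zero_of_pr_sq_eq_one hx hdet
    rw [Matrix.trace_fin_two] at this
    rw [Matrix.det_fin_two] at hdet
    rw [Matrix.det_fin_two]
    simp only [Matrix.sub_apply, Matrix.one_apply_eq, Matrix.one_apply_ne zero_ne_one,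
      Matrix.one_apply_ne one_ne_zero]
    linear_combination hdet - this
  obtain ⟨w, hw, hgw⟩ := Matrix.exists_mulVec_eq_zero_iff.2 hfix
  rw [Matrix.sub_mulVec, Matrix.one_mulVec, sub_eq_zero] at hgw
  obtain ⟨h, hh⟩ := exists_conj_apply_one_zero_eq_zero hw hgw
  exact ⟨pr h, by simpa using pr_mem_That hh⟩

namespace IsNeumann

variable {S : Subgroup Mhat}

lemma eq_one_of_conj_mem_That (hS : IsNeumann S) {s y : Mhat} (hs : s ∈ S)
    (h : y⁻¹ * s * y ∈ That) : s = 1 := by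
  obtain ⟨r, hr, t, ht, rfl⟩ : y ∈ (S : Set Mhat) * That := hS.1 ▸ Set.mem_univ y
  have hS' : r⁻¹ * s * r ∈ S := mul_mem (mul_mem (inv_mem hr) hs) hr
  have hT : r⁻¹ * s * r ∈ That := by
    convert mul_mem (mul_mem ht h) (inv_mem ht) using 1
    group
  have : r⁻¹ * s * r = 1 := by
    rw [← Subgroup.mem_bot, ← hS.2]
    exact ⟨hS', hT⟩
  simpa [mul_assoc, inv_mul_eq_one, eq_comm] using this

lemma detHat_eq_one_of_sq_eq_one (hS : IsNeumann S) {s : Mhat} (hs : s ∈ S) (h : s ^ 2 = 1) :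
    detHat s = 1 := by
  by_contra hdet
  obtain ⟨y, hy⟩ := exists_conj_mem_That h hdet
  exact hdet (by rw [hS.eq_one_of_conj_mem_That hs hy, map_one])

end IsNeumann

/-- If Ŝ is a Neumann subgroup of M̂ = PGL(2,ℤ) not contained
in M = PSL(2,ℤ) with (k,l,m)-structure, then S = Ŝ ∩ M has
(2k, 2l, 2m−1)-structure. -/
theorem neumann_inter_modular_klm_structure
    (Shat : Subgroup Mhat) (h1 : IsNeumann Shat) (h2 : ¬ Shat ≤ Msub)
    (k l m : ℕ∞) (h3 : HasKLMStructure Shat k l m) :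
    HasKLMStructure ↥(Shat ⊓ Msub) (2 * k) (2 * l) (2 * m - 1) := by
  let χ : Shat →* ℤˣ := detHat.comp Shat.subtype
  have ker_χ : χ.ker = Msub.subgroupOf Shat := by
    rw [Subgroup.subgroupOf, ← ker_detHat, MonoidHom.comap_ker]
  have card_units : Nat.card ℤˣ = 2 := by simp
  have χ_ne_one : χ ≠ 1 := fun h => h2 fun s hs => by
    rw [← ker_detHat]
    exact DFunLike.congr_fun h ⟨s, hs⟩
  have χ_torsion (g : Shat) (hg : g ^ 2 = 1 ∨ g ^ 3 = 1) : χ g = 1 := by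
    obtain hg | hg := hg
    · exact h1.detHat_eq_one_of_sq_eq_one g.2 (congrArg Subtype.val hg)
    · calc χ g = χ g ^ 3 := by rw [pow_succ, Int.units_sq, one_mul]
        _ = 1 := by rw [← map_pow, hg, map_one]
  obtain ⟨n, rfl, h⟩ := h3.ker_of_prime_card (card_units ▸ Nat.prime_two) χ_ne_one χ_torsion
  rw [card_units, Nat.cast_two, ker_χ, ← Subgroup.inf_subgroupOf_left] at h
  rw [enat_two_mul_add_one_sub_one]
  exact h.of_mulEquiv (Subgroup.subgroupOfEquivOfLe inf_le_left)
end
end
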